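/- arXiv:2605.04207 — 5 statements merged into one kernel-verified Lean document; each statement's English description precedes it below -/
import Mathlib

section
/- Let K:ℝ→[0,∞) be supported on [−1,1] with sup K = K_max < ∞, let q∈ℕ, let u1,…,un∈ℝ, h>0, x∈ℝ, and suppose the Gram matrix B_n(x) is invertible with λ_min(B_n(x)) ≥ c0·μ for some μ>0, and that #{i : |u_i−x| ≤ h} ≤ C0·n·h·μ. Then there is a constant C depending only on q, K_max, c0, C0 such that the first-derivative weights w¹(x,u_i) and zero-order weights w⁰(x,u_i) satisfy: (i) |w¹(x,u_i)| ≤ C/(n h² μ) and |w⁰(x,u_i)| ≤ C/(n h μ) for every i; (ii) Σ_{i=1}^n |w¹(x,u_i)| ≤ C/h and Σ_{i=1}^n |w⁰(x,u_i)| ≤ C; (iii) w¹(x,u_i) = w⁰(x,u_i) = 0 whenever |u_i−x| > h. -/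
/-!
Both weights are rescaled coordinates of `z = B⁻¹ v`, where `v = K(t) U(t)` and `t = (u_i - x) / h`.
The lower bound on the quadratic form together with the Cauchy-Schwarz inequality gives
`c₀ μ ‖z‖ ≤ ‖v‖`, and `‖v‖ ≤ (q + 1) K_max` because the entries of `U(t)` have modulus at most `1`
on `[-1, 1]`, off which `K` vanishes. This bounds each weight. Only the indices with
`|u_i - x| ≤ h` contribute to the sums, and there are at most `C₀ n h μ` of them, which cancels the
factor `1 / (n h μ)` in the individual bound.
-/

open MeasureTheory Set Matrix

/-- `U(u) = (1, u, u²/2!, …, u^q/q!)ᵀ ∈ ℝ^{q+1}`. -/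
noncomputable def Uvec (q : ℕ) (u : ℝ) : Fin (q+1) → ℝ :=
  fun j => u ^ (j : ℕ) / (Nat.factorial (j : ℕ))

/-- Local-polynomial Gram matrix
`B_n(x) = (1/(n h)) Σ_i K((u_i−x)/h) U((u_i−x)/h) U((u_i−x)/h)ᵀ`. -/
noncomputable def gramMatrix (q n : ℕ) (K : ℝ → ℝ) (h x : ℝ) (u : Fin n → ℝ) :
    Matrix (Fin (q+1)) (Fin (q+1)) ℝ :=
  (1 / ((n : ℝ) * h)) •
    ∑ i : Fin n, K ((u i - x)/h) •
      Matrix.vecMulVec (Uvec q ((u i - x)/h)) (Uvec q ((u i - x)/h))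

/-- First-derivative weights
`w¹(x,u_i) = (1/(n h²)) e₂ᵀ B_n(x)⁻¹ K((u_i−x)/h) U((u_i−x)/h)`. -/
noncomputable def wDeriv (q n : ℕ) (K : ℝ → ℝ) (h x : ℝ) (u : Fin n → ℝ) (i : Fin n) : ℝ :=
  (1 / ((n : ℝ) * h^2)) *
    ((gramMatrix q n K h x u)⁻¹.mulVec
      (fun j => K ((u i - x)/h) * Uvec q ((u i - x)/h) j)) 1

/-- Zero-order weights
`w⁰(x,u_i) = (1/(n h)) e₁ᵀ B_n(x)⁻¹ K((u_i−x)/h) U((u_i−x)/h)`. -/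
noncomputable def wZero (q n : ℕ) (K : ℝ → ℝ) (h x : ℝ) (u : Fin n → ℝ) (i : Fin n) : ℝ :=
  (1 / ((n : ℝ) * h)) *
    ((gramMatrix q n K h x u)⁻¹.mulVec
      (fun j => K ((u i - x)/h) * Uvec q ((u i - x)/h) j)) 0

lemma abs_smul_Uvec_le (q : ℕ) {K : ℝ → ℝ} {M : ℝ} (hK0 : ∀ t, 0 ≤ K t) (hKM : ∀ t, K t ≤ M)
    (hKs : ∀ t, t ∉ Icc (-1 : ℝ) 1 → K t = 0) (t : ℝ) (j : Fin (q + 1)) :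
    |K t * Uvec q t j| ≤ M := by
  have hM : 0 ≤ M := (hK0 t).trans (hKM t)
  by_cases ht : t ∈ Icc (-1 : ℝ) 1
  · have h1 : |t| ≤ 1 := abs_le.2 ht
    have hU : |Uvec q t j| ≤ 1 := by
      have hf : (1 : ℝ) ≤ (Nat.factorial (j : ℕ) : ℝ) := by
        exact_mod_cast Nat.factorial_pos (j : ℕ)
      unfold Uvec
      rw [abs_div, abs_pow, Nat.abs_cast, div_le_one (by linarith)]
      exact (pow_le_one₀ (abs_nonneg t) h1).trans hf
    rw [abs_mul, abs_of_nonneg (hK0 t)]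
    calc K t * |Uvec q t j| ≤ M * 1 := mul_le_mul (hKM t) hU (abs_nonneg _) hM
      _ = M := mul_one M
  · simpa [hKs t ht] using hM

/-- If the quadratic form of `B` is at least `a ‖y‖²`, then `B⁻¹` maps a vector with entries of
modulus at most `M` to a vector with entries of modulus at most `m M / a`, where `m` is the
dimension. -/
lemma abs_inv_mulVec_le {m : ℕ} {B : Matrix (Fin m) (Fin m) ℝ} {a M : ℝ} (ha : 0 < a)
    (hM : 0 ≤ M) (hB : IsUnit B)
    (hq : ∀ y : Fin m → ℝ, a * (∑ j, (y j) ^ 2) ≤ y ⬝ᵥ B.mulVec y)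
    {v : Fin m → ℝ} (hv : ∀ j, |v j| ≤ M) (k : Fin m) :
    |B⁻¹.mulVec v k| ≤ m * M / a := by
  set z := B⁻¹.mulVec v with hz
  have hBz : B.mulVec z = v := by
    rw [hz, Matrix.mulVec_mulVec, Matrix.mul_nonsing_inv _ ((Matrix.isUnit_iff_isUnit_det B).1 hB),
      Matrix.one_mulVec]
  have h1 := hq z
  rw [hBz] at h1
  have hcs : (z ⬝ᵥ v) ^ 2 ≤ (∑ j, z j ^ 2) * ∑ j, v j ^ 2 :=
    Finset.sum_mul_sq_le_sq_mul_sq _ _ _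
  have hS : 0 ≤ ∑ j, z j ^ 2 := Finset.sum_nonneg fun j _ => sq_nonneg _
  have hk : z k ^ 2 ≤ ∑ j, z j ^ 2 :=
    Finset.single_le_sum (f := fun j => z j ^ 2) (fun j _ => sq_nonneg _) (Finset.mem_univ k)
  have hV : ∑ j, v j ^ 2 ≤ m * M ^ 2 := by
    calc ∑ j, v j ^ 2 ≤ ∑ _j : Fin m, M ^ 2 :=
          Finset.sum_le_sum fun j _ => sq_le_sq' (abs_le.1 (hv j)).1 (abs_le.1 (hv j)).2
      _ = m * M ^ 2 := by simp
  have hm : (1 : ℝ) ≤ m := by exact_mod_cast (Nat.zero_le _).trans_lt k.isLt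
  have key : a ^ 2 * ∑ j, z j ^ 2 ≤ ∑ j, v j ^ 2 := by
    rcases hS.eq_or_lt with h0 | h0
    · rw [← h0, mul_zero]
      exact Finset.sum_nonneg fun j _ => sq_nonneg _
    · have h2 : (a * ∑ j, z j ^ 2) ^ 2 ≤ (z ⬝ᵥ v) ^ 2 :=
        pow_le_pow_left₀ (mul_nonneg ha.le hS) h1 2
      refine le_of_mul_le_mul_left ?_ h0
      calc (∑ j, z j ^ 2) * (a ^ 2 * ∑ j, z j ^ 2) = (a * ∑ j, z j ^ 2) ^ 2 := by ring
        _ ≤ _ := h2.trans hcs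
  rw [le_div_iff₀ ha]
  refine abs_le_of_sq_le_sq' ?_ (by positivity) |>.2
  calc (|z k| * a) ^ 2 = a ^ 2 * z k ^ 2 := by rw [mul_pow, sq_abs, mul_comm]
    _ ≤ a ^ 2 * ∑ j, z j ^ 2 := by gcongr
    _ ≤ m * M ^ 2 := key.trans hV
    _ ≤ m * M ^ 2 * m := le_mul_of_one_le_right (by positivity) hm
    _ = (m * M) ^ 2 := by ring

/-- The sup bound on a family, multiplied by the number of indices at which the family can be
nonzero. -/
lemma sum_abs_le_of_support {n : ℕ} {f : Fin n → ℝ} {p : Fin n → Prop} [DecidablePred p]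
    {b N : ℝ} (hb : 0 ≤ b) (hf : ∀ i, |f i| ≤ b) (h0 : ∀ i, ¬ p i → f i = 0)
    (hN : ((Finset.univ.filter p).card : ℝ) ≤ N) : ∑ i, |f i| ≤ N * b := by
  calc ∑ i, |f i| = ∑ i ∈ Finset.univ.filter p, |f i| := by
        refine (Finset.sum_subset (Finset.filter_subset _ _) fun i _ hi => ?_).symm
        rw [h0 i (by simpa using hi), abs_zero]
    _ ≤ (Finset.univ.filter p).card • b := Finset.sum_le_card_nsmul _ _ _ fun i _ => hf i
    _ ≤ N * b := by
        rw [nsmul_eq_mul]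
        gcongr

/-- **Bounds on the local-polynomial smoothing weights.**
The minimum-eigenvalue hypothesis `λ_min(B_n(x)) ≥ c0 μ` is expressed via the
quadratic form. -/
theorem weights_bounds (q : ℕ) (hq : 1 ≤ q) (K_max c0 C0 : ℝ)
    (hKmax : 0 < K_max) (hc0 : 0 < c0) (hC0 : 0 < C0) :
    ∃ C : ℝ, 0 < C ∧
      ∀ (K : ℝ → ℝ), (∀ t, 0 ≤ K t) → (∀ t, K t ≤ K_max) →
        (∀ t, t ∉ Icc (-1:ℝ) 1 → K t = 0) →
        ∀ (n : ℕ) (u : Fin n → ℝ) (h x μ : ℝ), 0 < h → 0 < μ →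
          IsUnit (gramMatrix q n K h x u) →
          (∀ y : Fin (q+1) → ℝ,
            c0 * μ * (∑ j, (y j)^2) ≤ y ⬝ᵥ (gramMatrix q n K h x u).mulVec y) →
          ((Finset.univ.filter fun i => |u i - x| ≤ h).card : ℝ) ≤ C0 * (n : ℝ) * h * μ →
          (∀ i, |wDeriv q n K h x u i| ≤ C / ((n : ℝ) * h^2 * μ) ∧
                |wZero q n K h x u i| ≤ C / ((n : ℝ) * h * μ)) ∧
          ((∑ i, |wDeriv q n K h x u i|) ≤ C / h ∧ (∑ i, |wZero q n K h x u i|) ≤ C) ∧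
          (∀ i, h < |u i - x| → wDeriv q n K h x u i = 0 ∧ wZero q n K h x u i = 0) := by
  set A : ℝ := ((q + 1 : ℕ) : ℝ) * K_max / c0 with hA
  have hA0 : 0 < A := by positivity
  refine ⟨A + C0 * A, by positivity, ?_⟩
  intro K hK0 hKM hKs n u h x μ hh hμ hB hq' hcard
  have hz : ∀ (i : Fin n) (k : Fin (q + 1)), |((gramMatrix q n K h x u)⁻¹.mulVec
      (fun j => K ((u i - x)/h) * Uvec q ((u i - x)/h) j)) k| ≤ A / μ := by
    intro i k
    have := abs_inv_mulVec_le (mul_pos hc0 hμ) hKmax.le hB hq'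
      (abs_smul_Uvec_le q hK0 hKM hKs ((u i - x)/h)) k
    rwa [← div_div] at this
  have hsupp : ∀ i, h < |u i - x| → wDeriv q n K h x u i = 0 ∧ wZero q n K h x u i = 0 := by
    intro i hi
    have hK : K ((u i - x)/h) = 0 := by
      apply hKs
      rw [Set.mem_Icc, ← abs_le, abs_div, abs_of_pos hh, div_le_one hh]
      exact not_le.2 hi
    have hv : (fun j => K ((u i - x)/h) * Uvec q ((u i - x)/h) j) = 0 := by
      ext j
      simp [hK]
    simp [wDeriv, wZero, hv]
  have hD : ∀ i, |wDeriv q n K h x u i| ≤ A / ((n : ℝ) * h^2 * μ) := by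
    intro i
    rw [wDeriv, abs_mul, abs_of_nonneg (by positivity : 0 ≤ 1 / ((n : ℝ) * h^2))]
    calc _ ≤ 1 / ((n : ℝ) * h^2) * (A / μ) := by
          gcongr
          exact hz i 1
      _ = _ := by rw [div_mul_div_comm, one_mul]
  have hZ : ∀ i, |wZero q n K h x u i| ≤ A / ((n : ℝ) * h * μ) := by
    intro i
    rw [wZero, abs_mul, abs_of_nonneg (by positivity : 0 ≤ 1 / ((n : ℝ) * h))]
    calc _ ≤ 1 / ((n : ℝ) * h) * (A / μ) := by
          gcongr
          exact hz i 0
      _ = _ := by rw [div_mul_div_comm, one_mul]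
  have hAC : A ≤ A + C0 * A := le_add_of_nonneg_right (by positivity)
  refine ⟨fun i => ⟨(hD i).trans (by gcongr), (hZ i).trans (by gcongr)⟩, ?_, hsupp⟩
  -- For `n = 0` the sums are empty, and `n` cannot be cancelled below.
  rcases Nat.eq_zero_or_pos n with rfl | hn
  · simp only [Finset.univ_eq_empty, Finset.sum_empty]
    exact ⟨by positivity, by positivity⟩
  have hn' : (0 : ℝ) < n := by exact_mod_cast hn
  have hCA : C0 * A ≤ A + C0 * A := le_add_of_nonneg_left hA0.le
  constructor
  · calc _ ≤ C0 * (n : ℝ) * h * μ * (A / ((n : ℝ) * h^2 * μ)) :=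
          sum_abs_le_of_support (by positivity) hD (fun i hi => (hsupp i (not_le.1 hi)).1) hcard
      _ = C0 * A / h := by field_simp
      _ ≤ _ := by gcongr
  · calc _ ≤ C0 * (n : ℝ) * h * μ * (A / ((n : ℝ) * h * μ)) :=
          sum_abs_le_of_support (by positivity) hZ (fun i hi => (hsupp i (not_le.1 hi)).2) hcard
      _ = C0 * A := by field_simp
      _ ≤ _ := hCA
end

section
/- Let K:ℝ→[0,∞) be continuously differentiable with K and K' bounded and K supported on [−1,1], let q∈ℕ, let u1,…,un∈ℝ, h>0, and let I⊂ℝ be an interval such that for every x∈I the Gram matrix satisfies λ_min(B_n(x)) ≥ c0·μ(x) for a positive function μ and #{i : |u_i−x| ≤ h} ≤ C0·n·h·μ(x). Then for every i, the map x ↦ w¹(x,u_i) is differentiable on I and there is a constant C, depending only on q, the bounds on K and K', c0, and C0, such that |d/dx w¹(x,u_i)| ≤ C/(n h³ μ(x)) for all x∈I. -/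
/-!
Write `y(x) = B(x)⁻¹ v(x)` with `B` the Gram matrix and `v(x) = K(t) U(t)`, `t = (u_i - x)/h`; the
weight is `y(x)₁ / (n h²)`. Where `B` is invertible, Cramer's rule makes `y` differentiable, and
differentiating `B y = v` gives `B y' = v' - B' y` (`inv_mulVec_hasDerivAt`). The lower bound
`c0 μ` on the quadratic form of `B` turns entrywise bounds on the right-hand side of a system
`B z = a` into bounds on `z` (`abs_sum_le_of_coercive`), and it is used twice: `v = O(1)` gives
`y = O(1/μ)`, and `v' - B' y = O(1/h)` gives `y' = O(1/(h μ))`. The latter needs `v' = O(1/h)` and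
`B' = O(μ/h)`. Both come from `kernel_hasDerivAt`: each term `K(t) p(t)` has an `x`-derivative of
size `O(1/h)` that vanishes unless `|u_i - x| ≤ h`, and the local count of design points bounds the
number of nonzero terms in `B'` by `C0 n h μ`.
-/

open MeasureTheory Set Matrix

/-- Coercivity controls solutions of linear systems: if the quadratic form of `B` is at least
`c |y|²` and the entries of `B y` are at most `A`, then the `ℓ¹` norm of `y` is at most
`N A / c`, where `N` is the dimension. -/
lemma abs_sum_le_of_coercive {m : Type*} [Fintype m] (B : Matrix m m ℝ) (c A : ℝ) (hc : 0 < c)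
    (hA : 0 ≤ A) (y : m → ℝ)
    (hB : c * ∑ j, (y j) ^ 2 ≤ y ⬝ᵥ B.mulVec y) (ha : ∀ j, |B.mulVec y j| ≤ A) :
    ∑ j, |y j| ≤ Fintype.card m * A / c := by
  have h1 : y ⬝ᵥ B.mulVec y ≤ A * ∑ j, |y j| := by
    rw [dotProduct, Finset.mul_sum]
    refine Finset.sum_le_sum fun j _ => ?_
    calc y j * B.mulVec y j ≤ |y j * B.mulVec y j| := le_abs_self _
      _ = |B.mulVec y j| * |y j| := by rw [abs_mul, mul_comm]
      _ ≤ A * |y j| := mul_le_mul_of_nonneg_right (ha j) (abs_nonneg _)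
  have h2 : (∑ j, |y j|) ^ 2 ≤ Fintype.card m * ∑ j, (y j) ^ 2 := by
    have := sq_sum_le_card_mul_sum_sq (s := (Finset.univ : Finset m)) (f := fun j => |y j|)
    simpa [sq_abs] using this
  set S := ∑ j, |y j| with hS
  have hS0 : 0 ≤ S := Finset.sum_nonneg fun j _ => abs_nonneg _
  rw [le_div_iff₀ hc]
  rcases hS0.eq_or_lt with h0 | h0
  · rw [← h0, zero_mul]; positivity
  · have hN : (0 : ℝ) ≤ Fintype.card m := by positivity
    have : S * (S * c) ≤ S * (Fintype.card m * A) := by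
      nlinarith [mul_le_mul_of_nonneg_left (hB.trans h1) hN]
    exact le_of_mul_le_mul_left this h0

lemma det_differentiableAt {m : Type*} [Fintype m] [DecidableEq m] (B : ℝ → Matrix m m ℝ) (x : ℝ)
    (hB : ∀ j k, DifferentiableAt ℝ (fun x => B x j k) x) :
    DifferentiableAt ℝ (fun x => (B x).det) x := by
  simp only [Matrix.det_apply]
  fun_prop

/-- The solution of a linear system with differentiable coefficients is differentiable where the
matrix is invertible, and its derivative solves the differentiated system. -/
lemma inv_mulVec_hasDerivAt {m : Type*} [Fintype m] [DecidableEq m] (B : ℝ → Matrix m m ℝ)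
    (v : ℝ → m → ℝ) (x : ℝ) (B' : Matrix m m ℝ) (v' : m → ℝ)
    (hB : ∀ j k, HasDerivAt (fun x => B x j k) (B' j k) x)
    (hv : ∀ j, HasDerivAt (fun x => v x j) (v' j) x) (hdet : (B x).det ≠ 0) :
    ∃ y' : m → ℝ, (∀ j, HasDerivAt (fun x => ((B x)⁻¹.mulVec (v x)) j) (y' j) x) ∧
      (B x).mulVec y' = v' - B'.mulVec ((B x)⁻¹.mulVec (v x)) := by
  have hd : DifferentiableAt ℝ (fun x => (B x).det) x :=
    det_differentiableAt B x fun j k => (hB j k).differentiableAt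
  have hy : ∀ j, DifferentiableAt ℝ (fun x => ((B x)⁻¹.mulVec (v x)) j) x := by
    intro j
    have heq : (fun x => ((B x)⁻¹.mulVec (v x)) j) =
        fun x => ((B x).det)⁻¹ * ((B x).updateCol j (v x)).det := by
      funext z
      rw [Matrix.inv_def, Matrix.smul_mulVec, ← Matrix.cramer_eq_adjugate_mulVec, Pi.smul_apply,
        Matrix.cramer_apply, smul_eq_mul, Ring.inverse_eq_inv']
    rw [heq]
    refine (hd.inv hdet).mul (det_differentiableAt _ x fun a b => ?_)
    by_cases hb : b = j
    · subst hb
      simpa using (hv a).differentiableAt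
    · simpa [Matrix.updateCol_apply, hb] using (hB a b).differentiableAt
  refine ⟨fun j => deriv (fun x => ((B x)⁻¹.mulVec (v x)) j) x, fun j => (hy j).hasDerivAt, ?_⟩
  have hev : ∀ᶠ z in nhds x, (B z).det ≠ 0 := hd.continuousAt.eventually_ne hdet
  funext j
  have h1 : HasDerivAt (fun z => ∑ k, B z j k * ((B z)⁻¹.mulVec (v z)) k)
      (∑ k, (B' j k * ((B x)⁻¹.mulVec (v x)) k +
        B x j k * deriv (fun x => ((B x)⁻¹.mulVec (v x)) k) x)) x :=
    HasDerivAt.fun_sum fun k _ => (hB j k).mul (hy k).hasDerivAt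
  have h2 : (fun z => ∑ k, B z j k * ((B z)⁻¹.mulVec (v z)) k) =ᶠ[nhds x] fun z => v z j := by
    filter_upwards [hev] with z hz
    have : (B z).mulVec ((B z)⁻¹.mulVec (v z)) = v z := by
      rw [Matrix.mulVec_mulVec, Matrix.mul_nonsing_inv _ (isUnit_iff_ne_zero.2 hz),
        Matrix.one_mulVec]
    exact congrFun this j
  have h3 := h1.unique ((hv j).congr_of_eventuallyEq h2)
  rw [Finset.sum_add_distrib] at h3
  simp only [Matrix.mulVec, dotProduct, Pi.sub_apply] at h3 ⊢
  linarith

/-- A rescaled kernel times a factor `p` with `p` and `p'` bounded on `[-1, 1]` has a derivative in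
the location of size `O(1/h)`, which vanishes outside the window `|a - x| ≤ h`: outside
`[-1, 1]` not only `K` but also `K'` is
zero, because the complement of `[-1, 1]` is open. -/
lemma kernel_hasDerivAt (K : ℝ → ℝ) (Kb : ℝ) (hKb : 0 < Kb) (hK : ContDiff ℝ 1 K)
    (hK0 : ∀ t, 0 ≤ K t) (hK1 : ∀ t, K t ≤ Kb) (hK2 : ∀ t, |deriv K t| ≤ Kb)
    (hsupp : ∀ t, t ∉ Icc (-1 : ℝ) 1 → K t = 0) (p p' : ℝ → ℝ)
    (hp : ∀ t, HasDerivAt p (p' t) t) (hp1 : ∀ t, |t| ≤ 1 → |p t| ≤ 1)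
    (hp2 : ∀ t, |t| ≤ 1 → |p' t| ≤ 2) (a h x : ℝ) (hh : 0 < h) :
    ∃ D, HasDerivAt (fun x => K ((a - x) / h) * p ((a - x) / h)) D x ∧
      |D| ≤ if |a - x| ≤ h then 3 * Kb / h else 0 := by
  have hlin : HasDerivAt (fun x => (a - x) / h) (-1 / h) x :=
    ((hasDerivAt_id x).const_sub a).div_const h
  set t := (a - x) / h with ht
  have hKd : HasDerivAt K (deriv K t) t :=
    ((hK.differentiable one_ne_zero) t).hasDerivAt
  refine ⟨(deriv K t * p t + K t * p' t) * (-1 / h),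
    HasDerivAt.comp (h₂ := fun s => K s * p s) x (hKd.mul (hp t)) hlin, ?_⟩
  have htabs : |t| ≤ 1 ↔ |a - x| ≤ h := by
    rw [ht, abs_div, abs_of_pos hh, div_le_one hh]
  split_ifs with hx
  · have ht1 := htabs.2 hx
    rw [abs_mul, abs_div, abs_neg, abs_one, abs_of_pos hh, mul_one_div]
    refine div_le_div_of_nonneg_right ?_ hh.le
    have e1 : |deriv K t * p t| ≤ Kb * 1 := by
      rw [abs_mul]
      exact mul_le_mul (hK2 t) (hp1 t ht1) (abs_nonneg _) hKb.le
    have e2 : |K t * p' t| ≤ Kb * 2 := by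
      rw [abs_mul, abs_of_nonneg (hK0 t)]
      exact mul_le_mul (hK1 t) (hp2 t ht1) (abs_nonneg _) hKb.le
    linarith [abs_add_le (deriv K t * p t) (K t * p' t)]
  · have ht1 : t ∉ Icc (-1 : ℝ) 1 := fun hm => hx (htabs.1 (abs_le.2 hm))
    have hev : K =ᶠ[nhds t] fun _ => 0 := by
      filter_upwards [isClosed_Icc.isOpen_compl.mem_nhds ht1] with s hs using hsupp s hs
    rw [hsupp t ht1, hev.deriv_eq]
    simp

lemma Uvec_abs_le (q : ℕ) (j : Fin (q + 1)) (t : ℝ) (ht : |t| ≤ 1) : |Uvec q t j| ≤ 1 := by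
  have hf : (1 : ℝ) ≤ (j : ℕ).factorial := by exact_mod_cast Nat.succ_le_of_lt (Nat.factorial_pos _)
  rw [Uvec, abs_div, abs_pow, abs_of_pos (by linarith : (0 : ℝ) < (j : ℕ).factorial)]
  rw [div_le_one (by linarith)]
  exact (pow_le_one₀ (abs_nonneg _) ht).trans hf

lemma Uvec_hasDerivAt (q : ℕ) (j : Fin (q + 1)) :
    ∃ p' : ℝ → ℝ, (∀ t, HasDerivAt (fun t => Uvec q t j) (p' t) t) ∧
      ∀ t, |t| ≤ 1 → |p' t| ≤ 1 := by
  refine ⟨fun t => ((j : ℕ) * t ^ ((j : ℕ) - 1)) / (j : ℕ).factorial,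
    fun t => (hasDerivAt_pow (j : ℕ) t).div_const _, fun t ht => ?_⟩
  have hf : (0 : ℝ) < (j : ℕ).factorial := by exact_mod_cast Nat.factorial_pos _
  have hj : ((j : ℕ) : ℝ) ≤ (j : ℕ).factorial := by exact_mod_cast Nat.self_le_factorial _
  rw [abs_div, abs_mul, abs_pow, abs_of_pos hf, div_le_one hf, Nat.abs_cast]
  exact (mul_le_of_le_one_right (by positivity) (pow_le_one₀ (abs_nonneg _) ht)).trans hj

lemma gramMatrix_apply (q n : ℕ) (K : ℝ → ℝ) (h x : ℝ) (u : Fin n → ℝ) (j k : Fin (q + 1)) :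
    gramMatrix q n K h x u j k = (1 / ((n : ℝ) * h)) *
      ∑ i, K ((u i - x) / h) * (Uvec q ((u i - x) / h) j * Uvec q ((u i - x) / h) k) := by
  simp [gramMatrix, Matrix.sum_apply, Matrix.vecMulVec_apply]

/-- **Lipschitz/derivative bound for the first-derivative weights in the location `x`.** -/
theorem weights_deriv_bound (q : ℕ) (hq : 1 ≤ q) (Kb c0 C0 : ℝ)
    (hKb : 0 < Kb) (hc0 : 0 < c0) (hC0 : 0 < C0) :
    ∃ C : ℝ, 0 < C ∧
      ∀ (K : ℝ → ℝ), ContDiff ℝ 1 K → (∀ t, 0 ≤ K t) → (∀ t, K t ≤ Kb) →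
        (∀ t, |deriv K t| ≤ Kb) → (∀ t, t ∉ Icc (-1:ℝ) 1 → K t = 0) →
        ∀ (n : ℕ) (u : Fin n → ℝ) (h : ℝ) (I : Set ℝ) (μ : ℝ → ℝ),
          0 < h → I.OrdConnected →
          (∀ x ∈ I, 0 < μ x) →
          (∀ x ∈ I, ∀ y : Fin (q+1) → ℝ,
            c0 * μ x * (∑ j, (y j)^2) ≤ y ⬝ᵥ (gramMatrix q n K h x u).mulVec y) →
          (∀ x ∈ I,
            ((Finset.univ.filter fun i => |u i - x| ≤ h).card : ℝ) ≤ C0 * (n : ℝ) * h * μ x) →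
          ∀ i : Fin n,
            DifferentiableOn ℝ (fun x => wDeriv q n K h x u i) I ∧
            ∀ x ∈ I, |derivWithin (fun x => wDeriv q n K h x u i) I x| ≤
              C / ((n : ℝ) * h^3 * μ x) := by
  set N : ℝ := (q : ℝ) + 1 with hN
  have hNpos : 0 < N := by positivity
  -- `A` bounds the entries of `h (v' - B' y)`, from `|v'| ≤ 3 Kb / h`, `|B'| ≤ 3 C0 Kb μ / h` and
  -- `∑ |y| ≤ N Kb / (c0 μ)`.
  set A : ℝ := 3 * Kb + 3 * C0 * Kb * (N * Kb / c0) with hA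
  have hApos : 0 < A := by positivity
  refine ⟨N * A / c0, by positivity, ?_⟩
  intro K hK hK0 hK1 hK2 hsupp n u h I μ hh _ hμ hcoer hcount i
  have hn : (0 : ℝ) < n := by exact_mod_cast i.pos
  suffices key : ∀ x ∈ I, ∃ D, HasDerivAt (fun x => wDeriv q n K h x u i) D x ∧
      |D| ≤ N * A / c0 / ((n : ℝ) * h ^ 3 * μ x) by
    refine ⟨fun x hx => ?_, fun x hx => ?_⟩
    · obtain ⟨D, hD, -⟩ := key x hx
      exact hD.differentiableAt.differentiableWithinAt
    · obtain ⟨D, hD, hb⟩ := key x hx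
      by_cases hu : UniqueDiffWithinAt ℝ I x
      · rwa [hD.hasDerivWithinAt.derivWithin hu]
      -- At an isolated point of `I` the within-derivative is `0` by convention.
      · rw [derivWithin_zero_of_not_uniqueDiffWithinAt hu, abs_zero]
        exact (abs_nonneg _).trans hb
  intro x hx
  have hμx := hμ x hx
  have hcμ : 0 < c0 * μ x := mul_pos hc0 hμx
  have hdet : (gramMatrix q n K h x u).det ≠ 0 := by
    intro h0
    obtain ⟨y, hy0, hy⟩ := Matrix.exists_mulVec_eq_zero_iff.2 h0
    have h1 := hcoer x hx y
    rw [hy, dotProduct_zero] at h1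
    have h2 : 0 < ∑ j, (y j) ^ 2 := by
      obtain ⟨j, hj⟩ := Function.ne_iff.1 hy0
      exact Finset.sum_pos' (fun _ _ => sq_nonneg _)
        ⟨j, Finset.mem_univ _, by have : y j ≠ 0 := hj; positivity⟩
    nlinarith [mul_pos hcμ h2]
  have hv : ∀ j : Fin (q + 1), ∃ D,
      HasDerivAt (fun x => K ((u i - x) / h) * Uvec q ((u i - x) / h) j) D x ∧
        |D| ≤ 3 * Kb / h := by
    intro j
    obtain ⟨p', hp', hb⟩ := Uvec_hasDerivAt q j
    obtain ⟨D, hD, hDb⟩ := kernel_hasDerivAt K Kb hKb hK hK0 hK1 hK2 hsupp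
      (fun t => Uvec q t j) p' hp' (Uvec_abs_le q j)
      (fun t ht => (hb t ht).trans one_le_two) (u i) h x hh
    refine ⟨D, hD, hDb.trans ?_⟩
    split_ifs
    · exact le_rfl
    · positivity
  have hBd : ∀ j k : Fin (q + 1), ∃ D,
      HasDerivAt (fun x => gramMatrix q n K h x u j k) D x ∧
        |D| ≤ 3 * C0 * Kb * μ x / h := by
    intro j k
    obtain ⟨p, hp, hpb⟩ := Uvec_hasDerivAt q j
    obtain ⟨r, hr, hrb⟩ := Uvec_hasDerivAt q k
    have hterm : ∀ l, ∃ D, HasDerivAt (fun x => K ((u l - x) / h) *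
        (Uvec q ((u l - x) / h) j * Uvec q ((u l - x) / h) k)) D x ∧
        |D| ≤ if |u l - x| ≤ h then 3 * Kb / h else 0 := by
      intro l
      refine kernel_hasDerivAt K Kb hKb hK hK0 hK1 hK2 hsupp
        (fun t => Uvec q t j * Uvec q t k) (fun t => p t * Uvec q t k + Uvec q t j * r t)
        (fun t => (hp t).mul (hr t)) (fun t ht => ?_) (fun t ht => ?_) (u l) h x hh
      · rw [abs_mul]
        exact mul_le_one₀ (Uvec_abs_le q j t ht) (abs_nonneg _) (Uvec_abs_le q k t ht)
      · have e1 : |p t * Uvec q t k| ≤ 1 := by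
          rw [abs_mul]
          exact mul_le_one₀ (hpb t ht) (abs_nonneg _) (Uvec_abs_le q k t ht)
        have e2 : |Uvec q t j * r t| ≤ 1 := by
          rw [abs_mul]
          exact mul_le_one₀ (Uvec_abs_le q j t ht) (abs_nonneg _) (hrb t ht)
        linarith [abs_add_le (p t * Uvec q t k) (Uvec q t j * r t)]
    choose D hD hDb using hterm
    refine ⟨(1 / ((n : ℝ) * h)) * ∑ l, D l, ?_, ?_⟩
    · simp only [gramMatrix_apply]
      exact (HasDerivAt.fun_sum fun l _ => hD l).const_mul _
    · have hs : |∑ l, D l| ≤ C0 * n * h * μ x * (3 * Kb / h) := by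
        calc |∑ l, D l| ≤ ∑ l, |D l| := Finset.abs_sum_le_sum_abs _ _
          _ ≤ ∑ l, if |u l - x| ≤ h then 3 * Kb / h else 0 :=
            Finset.sum_le_sum fun l _ => hDb l
          _ = ((Finset.univ.filter fun l => |u l - x| ≤ h).card : ℝ) * (3 * Kb / h) := by
            rw [← Finset.sum_filter, Finset.sum_const, nsmul_eq_mul]
          _ ≤ _ := mul_le_mul_of_nonneg_right (hcount x hx) (by positivity)
      rw [abs_mul, abs_of_pos (by positivity : (0 : ℝ) < 1 / ((n : ℝ) * h))]
      calc 1 / ((n : ℝ) * h) * |∑ l, D l|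
          ≤ 1 / ((n : ℝ) * h) * (C0 * n * h * μ x * (3 * Kb / h)) := by gcongr
        _ = 3 * C0 * Kb * μ x / h := by field_simp
  choose v' hv' hvb using hv
  choose B' hB' hBb using hBd
  obtain ⟨y', hy', hsys⟩ := inv_mulVec_hasDerivAt (fun x => gramMatrix q n K h x u)
    (fun x j => K ((u i - x) / h) * Uvec q ((u i - x) / h) j) x B' v' hB' hv' hdet
  set y := (gramMatrix q n K h x u)⁻¹.mulVec
    (fun j => K ((u i - x) / h) * Uvec q ((u i - x) / h) j) with hy
  have hcard : (Fintype.card (Fin (q + 1)) : ℝ) = N := by simp [hN]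
  have hysum : ∑ j, |y j| ≤ N * Kb / (c0 * μ x) := by
    rw [← hcard]
    refine abs_sum_le_of_coercive _ _ _ hcμ hKb.le y (hcoer x hx y) fun j => ?_
    rw [hy, Matrix.mulVec_mulVec, Matrix.mul_nonsing_inv _ (isUnit_iff_ne_zero.2 hdet),
      Matrix.one_mulVec, abs_mul, abs_of_nonneg (hK0 _)]
    by_cases ht : (u i - x) / h ∈ Icc (-1 : ℝ) 1
    · calc _ ≤ Kb * 1 := mul_le_mul (hK1 _) (Uvec_abs_le q j _ (abs_le.2 ht)) (abs_nonneg _) hKb.le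
        _ = Kb := mul_one _
    · rw [hsupp _ ht, zero_mul]; exact hKb.le
  have hy'sum : ∑ j, |y' j| ≤ N * (A / h) / (c0 * μ x) := by
    rw [← hcard]
    refine abs_sum_le_of_coercive _ _ _ hcμ (by positivity) y' (hcoer x hx y') fun j => ?_
    rw [hsys, Pi.sub_apply]
    have hBy : |(Matrix.mulVec B' y) j| ≤ 3 * C0 * Kb * μ x / h * (N * Kb / (c0 * μ x)) := by
      calc |(Matrix.mulVec B' y) j| ≤ ∑ k, |B' j k * y k| :=
            Finset.abs_sum_le_sum_abs (fun k => B' j k * y k) Finset.univ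
        _ ≤ ∑ k, 3 * C0 * Kb * μ x / h * |y k| := by
          refine Finset.sum_le_sum fun k _ => ?_
          rw [abs_mul]
          exact mul_le_mul_of_nonneg_right (hBb j k) (abs_nonneg _)
        _ = 3 * C0 * Kb * μ x / h * ∑ k, |y k| := by rw [Finset.mul_sum]
        _ ≤ _ := by gcongr
    calc |v' j - (Matrix.mulVec B' y) j| ≤ |v' j| + |(Matrix.mulVec B' y) j| := abs_sub _ _
      _ ≤ 3 * Kb / h + 3 * C0 * Kb * μ x / h * (N * Kb / (c0 * μ x)) := add_le_add (hvb j) hBy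
      _ = A / h := by rw [hA]; field_simp
  refine ⟨(1 / ((n : ℝ) * h ^ 2)) * y' 1, (hy' 1).const_mul _, ?_⟩
  have h1 : |y' 1| ≤ N * (A / h) / (c0 * μ x) :=
    (Finset.single_le_sum (f := fun j => |y' j|) (fun _ _ => abs_nonneg _)
      (Finset.mem_univ _)).trans hy'sum
  rw [abs_mul, abs_of_pos (by positivity : (0 : ℝ) < 1 / ((n : ℝ) * h ^ 2))]
  calc 1 / ((n : ℝ) * h ^ 2) * |y' 1|
      ≤ 1 / ((n : ℝ) * h ^ 2) * (N * (A / h) / (c0 * μ x)) := by gcongr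
    _ = N * A / c0 / ((n : ℝ) * h ^ 3 * μ x) := by field_simp
end

section
/- Let q ≥ 1 be an integer, α∈(0,1], and β = q + α. Let F:ℝ→ℝ be q-times differentiable with |F^{(q)}(s) − F^{(q)}(t)| ≤ L·|s−t|^α for all s,t∈ℝ. Let x∈ℝ, h>0, points u1,…,un ∈ [x−h, x+h], and weights w1,…,wn ∈ ℝ satisfying Σ_{i=1}^n |w_i| ≤ C/h and the polynomial-reproduction identities Σ_{i=1}^n w_i·(u_i−x)^k = 1 if k=1 and = 0 for the other k∈{0,1,…,q}. Then |Σ_{i=1}^n F(u_i)·w_i − F'(x)| ≤ (L·C/q!)·h^{β−1}. -/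
/-!
The Hölder condition makes the `q`-th derivative continuous, so `F` is `C^q` and Taylor's theorem
with Lagrange remainder applies to order `q - 1`. Replacing the `q`-th derivative at the
intermediate point by its value at `x` costs at most `L h^α`, hence `F` differs from its degree-`q`
Taylor polynomial at `x` by at most `L h^α h^q / q!` on `[x - h, x + h]` (`taylor_holder_bound`).
The weights turn that Taylor polynomial into exactly `F'(x)`, so the bias is the weighted sum of the
remainders, which is bounded using `∑ |w i| ≤ C / h`.
-/

open Set

theorem contDiff_of_holder_iteratedDeriv {q : ℕ} {α L : ℝ} (hα : 0 < α) {F : ℝ → ℝ}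
    (hdiff : ∀ k < q, Differentiable ℝ (iteratedDeriv k F))
    (hHolder : ∀ s t : ℝ, |iteratedDeriv q F s - iteratedDeriv q F t| ≤ L * |s - t| ^ α) :
    ContDiff ℝ q F := by
  have hcont : Continuous (iteratedDeriv q F) := by
    rw [continuous_iff_continuousAt]
    intro t
    rw [ContinuousAt, tendsto_iff_norm_sub_tendsto_zero]
    refine squeeze_zero (fun _ => norm_nonneg _) (fun s => hHolder s t) ?_
    have h1 : Continuous fun s : ℝ => L * |s - t| ^ α :=
      continuous_const.mul ((by fun_prop : Continuous fun s : ℝ => |s - t|).rpow_const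
        fun _ => Or.inr hα.le)
    have h2 := h1.tendsto t
    simpa [Real.zero_rpow hα.ne'] using h2
  rw [contDiff_nat_iff_iteratedDeriv]
  refine ⟨fun m hm => ?_, fun m hm => hdiff m hm⟩
  rcases hm.lt_or_eq with hm | rfl
  · exact (hdiff m hm).continuous
  · exact hcont

/-- On `[x - h, x + h]`, a function with `α`-Hölder `q`-th derivative is within
`L h^α h^q / q!` of its Taylor polynomial of degree `q` at `x`. -/
theorem taylor_holder_bound {q : ℕ} (hq : 1 ≤ q) {α L : ℝ} (hα : 0 < α) (hL : 0 ≤ L) {F : ℝ → ℝ}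
    (hdiff : ∀ k < q, Differentiable ℝ (iteratedDeriv k F))
    (hHolder : ∀ s t : ℝ, |iteratedDeriv q F s - iteratedDeriv q F t| ≤ L * |s - t| ^ α)
    {x h t : ℝ} (ht : |t - x| ≤ h) :
    |F t - ∑ k ∈ Finset.range (q + 1), iteratedDeriv k F x / (Nat.factorial k) * (t - x) ^ k| ≤
      L * h ^ α * h ^ q / (Nat.factorial q) := by
  have hF := contDiff_of_holder_iteratedDeriv hα hdiff hHolder
  have h0 : 0 ≤ h := (abs_nonneg _).trans ht
  obtain ⟨n, rfl⟩ : ∃ n, q = n + 1 := ⟨q - 1, by omega⟩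
  rcases eq_or_ne x t with rfl | hxt
  · have : (∑ k ∈ Finset.range (n + 1 + 1),
        iteratedDeriv k F x / (Nat.factorial k) * (x - x) ^ k) = F x := by
      rw [Finset.sum_range_succ']
      simp
    rw [this, sub_self, abs_zero]
    positivity
  · obtain ⟨ξ, hξ, hT⟩ := taylor_mean_remainder_lagrange_iteratedDeriv hxt
      (n := n) (hF.contDiffOn (s := uIcc x t))
    have hcoef : taylorWithinEval F n (uIcc x t) x t =
        ∑ k ∈ Finset.range (n + 1), iteratedDeriv k F x / (Nat.factorial k) * (t - x) ^ k := by
      rw [taylor_within_apply]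
      refine Finset.sum_congr rfl fun k hk => ?_
      rw [iteratedDerivWithin_eq_iteratedDeriv (uniqueDiffOn_uIcc hxt)
        (hF.contDiffAt.of_le (by exact_mod_cast (Finset.mem_range.mp hk).le)) left_mem_uIcc,
        smul_eq_mul]
      ring
    have hξx : |ξ - x| ≤ h :=
      (abs_sub_left_of_mem_uIcc (uIoo_subset_uIcc_self hξ)).trans ht
    rw [Finset.sum_range_succ, ← hcoef, ← sub_sub, hT]
    have hrem : iteratedDeriv (n + 1) F ξ * (t - x) ^ (n + 1) / (Nat.factorial (n + 1))
        - iteratedDeriv (n + 1) F x / (Nat.factorial (n + 1)) * (t - x) ^ (n + 1)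
        = (iteratedDeriv (n + 1) F ξ - iteratedDeriv (n + 1) F x) * (t - x) ^ (n + 1)
          / (Nat.factorial (n + 1)) := by ring
    rw [hrem, abs_div, abs_mul, abs_pow, Nat.abs_cast]
    have h1 : |iteratedDeriv (n + 1) F ξ - iteratedDeriv (n + 1) F x| ≤ L * h ^ α :=
      (hHolder ξ x).trans (by gcongr)
    gcongr

/-- **Bias bound for the first-derivative estimate in local polynomial regression.**
`F` is `β`-smooth with `β = q + α`: it is `q`-times differentiable and its `q`-th
derivative is `α`-Hölder with constant `L`.  The weights reproduce polynomials of
degree up to `q` (picking out the first-derivative coefficient) and satisfy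
`Σ|w_i| ≤ C/h`, with all design points inside `[x−h, x+h]`. -/
theorem local_poly_bias_bound
    (q : ℕ) (hq : 1 ≤ q) (α L C : ℝ) (hα : α ∈ Ioc (0:ℝ) 1) (hL : 0 ≤ L) (hC : 0 ≤ C)
    (F : ℝ → ℝ)
    (hdiff : ∀ k < q, Differentiable ℝ (iteratedDeriv k F))
    (hHolder : ∀ s t : ℝ, |iteratedDeriv q F s - iteratedDeriv q F t| ≤ L * |s - t| ^ α)
    (x h : ℝ) (hh : 0 < h) (n : ℕ) (u w : Fin n → ℝ)
    (hu : ∀ i, u i ∈ Icc (x - h) (x + h))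
    (hwsum : (∑ i, |w i|) ≤ C / h)
    (hrepr : ∀ k ≤ q, (∑ i, w i * (u i - x) ^ k) = if k = 1 then 1 else 0) :
    |(∑ i, F (u i) * w i) - deriv F x| ≤
      (L * C / (Nat.factorial q)) * h ^ ((q : ℝ) + α - 1) := by
  have hweights : ∑ i, (∑ k ∈ Finset.range (q + 1),
      iteratedDeriv k F x / (Nat.factorial k) * (u i - x) ^ k) * w i = deriv F x := by
    calc _ = ∑ k ∈ Finset.range (q + 1), iteratedDeriv k F x / (Nat.factorial k) *
          ∑ i, w i * (u i - x) ^ k := by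
          simp_rw [Finset.sum_mul, Finset.mul_sum]
          rw [Finset.sum_comm]
          refine Finset.sum_congr rfl fun k _ => Finset.sum_congr rfl fun i _ => by ring
      _ = ∑ k ∈ Finset.range (q + 1), iteratedDeriv k F x / (Nat.factorial k) *
          (if k = 1 then 1 else 0) :=
          Finset.sum_congr rfl fun k hk => by
            rw [hrepr k (Nat.lt_succ_iff.mp (Finset.mem_range.mp hk))]
      _ = deriv F x := by
          have : 1 ∈ Finset.range (q + 1) := Finset.mem_range.mpr (by omega)
          simp only [mul_ite, mul_one, mul_zero, Finset.sum_ite_eq', this, if_true,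
            iteratedDeriv_one, Nat.factorial_one, Nat.cast_one, div_one]
  rw [← hweights, ← Finset.sum_sub_distrib]
  simp_rw [← sub_mul]
  calc _ ≤ ∑ i, L * h ^ α * h ^ q / (Nat.factorial q) * |w i| := by
        refine (Finset.abs_sum_le_sum_abs _ _).trans (Finset.sum_le_sum fun i _ => ?_)
        rw [abs_mul]
        refine mul_le_mul_of_nonneg_right
          (taylor_holder_bound hq hα.1 hL hdiff hHolder ?_) (abs_nonneg _)
        rw [abs_le]
        constructor <;> linarith [(hu i).1, (hu i).2]
    _ = L * h ^ α * h ^ q / (Nat.factorial q) * ∑ i, |w i| := by rw [Finset.mul_sum]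
    _ ≤ L * h ^ α * h ^ q / (Nat.factorial q) * (C / h) := by gcongr
    _ = _ := by
        rw [Real.rpow_sub hh, Real.rpow_add hh, Real.rpow_natCast, Real.rpow_one]
        ring
end

section
/- Let X be a random vector supported on [0,1]^d with density f_X satisfying 0 < c ≤ f_X(x) ≤ C < ∞ for all x∈[0,1]^d, and let m_1,…,m_d ∈ C¹([0,1]) satisfy 0 < γ1 ≤ m_j'(u) ≤ Γ1 < ∞ for all u∈[0,1] and all j. Define the additive map m(x) = Σ_{j=1}^d m_j(x_j), and set u̲ = Σ_{j=1}^d m_j(0) and ū = Σ_{j=1}^d m_j(1). Then the random variable Y = m(X) admits a density f_Y on [u̲, ū], and there exist constants 0 < k1 ≤ k2 < ∞, depending only on (d, c, C, γ1, Γ1), such that for all t∈(u̲,ū): k1·(min{t−u̲, ū−t})^{d−1} ≤ f_Y(t) ≤ k2·(min{t−u̲, ū−t})^{d−1}. -/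
/-!
Since `f_X` lies in `[c, C]` on the cube, the law of `X` lies between `c` and `C` times the uniform
law, so it suffices to compare, as measures, the pushforward of the uniform law with the profile
`min (t - u̲) (ū - t) ^ (d - 1)`.

Under the uniform law the summands `m_j (x_j)` are independent, so this pushforward is a convolution
of `d` one-dimensional laws. By change of variables each of them is comparable to Lebesgue measure
on `[m_j 0, m_j 1]`, an interval of length in `[γ1, Γ1]` (`HasSlopeIn.map_bounds`). Convolving a
profile with the indicator of an interval raises its exponent by one, up to constants depending only
on `d, γ1, Γ1` (`lconvolution_profile_le`, `le_lconvolution_profile`); induction on the dimension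
gives `map_sum_bounds`.

The resulting two-sided comparison of measures forces absolute continuity and almost everywhere
bounds for the Radon–Nikodym derivative; truncating that derivative gives a version satisfying the
bounds everywhere (`exists_density`).
-/

open MeasureTheory ProbabilityTheory Set

open scoped ENNReal NNReal

namespace AdditivePushforward

/-! ### Boundary profiles and their convolutions -/

/-- The boundary profile `t ↦ min (t - u) (U - t) ^ n` on `[u, U]`, extended by `0` and valued in
`ℝ≥0∞`. For `n = 0` it is the indicator of the closed interval `[u, U]`. -/
noncomputable def profile (n : ℕ) (u U : ℝ) : ℝ → ℝ≥0∞ :=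
  (Icc u U).indicator fun t => ENNReal.ofReal (min (t - u) (U - t) ^ n)

lemma measurable_profile (n : ℕ) (u U : ℝ) : Measurable (profile n u U) := by
  unfold profile
  exact Measurable.indicator (by fun_prop) measurableSet_Icc

lemma profile_of_mem {n : ℕ} {u U t : ℝ} (h : t ∈ Icc u U) :
    profile n u U t = ENNReal.ofReal (min (t - u) (U - t) ^ n) := indicator_of_mem h _

lemma profile_of_notMem {n : ℕ} {u U t : ℝ} (h : t ∉ Icc u U) : profile n u U t = 0 :=
  indicator_of_notMem h _

lemma withDensity_profile_zero (a b : ℝ) :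
    volume.withDensity (profile 0 a b) = volume.restrict (Icc a b) := by
  unfold profile
  rw [withDensity_indicator measurableSet_Icc]
  simp

/-- Convolving a profile with an interval indicator raises the exponent by one: both the values of
the integrand and the length of its support are at most the distance to the boundary. -/
lemma lconvolution_profile_le (n : ℕ) (a b u U t : ℝ) :
    (profile 0 a b ⋆ₗ profile n u U) t ≤ profile (n + 1) (a + u) (b + U) t := by
  rw [lconvolution_def]
  by_cases ht : t ∈ Icc (a + u) (b + U)
  · set τ := min (t - (a + u)) (b + U - t) with hτ
    have hτ0 : 0 ≤ τ := le_min (by linarith [ht.1]) (by linarith [ht.2])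
    have h1 : τ ≤ t - (a + u) := min_le_left _ _
    calc ∫⁻ y, profile 0 a b y * profile n u U (-y + t)
        ≤ ∫⁻ y, (Icc (max a (t - U)) (min b (t - u))).indicator
            (fun _ => ENNReal.ofReal (τ ^ n)) y := by
          refine lintegral_mono fun y => ?_
          by_cases hy : y ∈ Icc a b
          · by_cases hz : -y + t ∈ Icc u U
            · have hm : y ∈ Icc (max a (t - U)) (min b (t - u)) :=
                ⟨max_le hy.1 (by linarith [hz.2]), le_min hy.2 (by linarith [hz.1])⟩
              rw [indicator_of_mem hm, profile_of_mem hy, profile_of_mem hz]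
              simp only [pow_zero, ENNReal.ofReal_one, one_mul]
              refine ENNReal.ofReal_le_ofReal (pow_le_pow_left₀
                (le_min (by linarith [hz.1]) (by linarith [hz.2])) ?_ n)
              exact min_le_min (by linarith [hy.1]) (by linarith [hy.2])
            · simp [profile_of_notMem hz]
          · simp [profile_of_notMem hy]
      _ = ENNReal.ofReal (τ ^ n) * ENNReal.ofReal (min b (t - u) - max a (t - U)) := by
          rw [lintegral_indicator_const measurableSet_Icc, Real.volume_Icc]
      _ ≤ ENNReal.ofReal (τ ^ n) * ENNReal.ofReal τ := by
          gcongr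
          refine le_min ?_ ?_
          · linarith [min_le_right b (t - u), le_max_left a (t - U)]
          · linarith [min_le_left b (t - u), le_max_right a (t - U)]
      _ = profile (n + 1) (a + u) (b + U) t := by
          rw [profile_of_mem ht, ← ENNReal.ofReal_mul (by positivity), pow_succ]
  · rw [profile_of_notMem ht, nonpos_iff_eq_zero, ← lintegral_zero (μ := (volume : Measure ℝ))]
    refine lintegral_congr fun y => ?_
    by_cases hy : y ∈ Icc a b
    · have hz : -y + t ∉ Icc u U := fun hz =>
        ht ⟨by linarith [hz.1, hy.1], by linarith [hz.2, hy.2]⟩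
      simp [profile_of_notMem hz]
    · simp [profile_of_notMem hy]

/-- Reverse of `lconvolution_profile_le`: with `τ` the distance from `t` to the boundary, the
integrand is at least `(κ τ) ^ n` on an interval of length at least `κ τ`, provided `κ` is small
relative to the aspect ratio of `[a, b]` and `[u, U]`. -/
lemma le_lconvolution_profile (n : ℕ) {a b u U κ : ℝ} (hκ0 : 0 < κ) (hκ : κ ≤ 1 / 3)
    (hD : 3 * κ * ((b - a) + (U - u)) ≤ U - u) (hL : 3 * κ * ((b - a) + (U - u)) ≤ b - a) (t : ℝ) :
    ENNReal.ofReal (κ ^ (n + 1)) * profile (n + 1) (a + u) (b + U) t ≤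
      (profile 0 a b ⋆ₗ profile n u U) t := by
  by_cases ht : t ∈ Icc (a + u) (b + U)
  · rw [lconvolution_def, profile_of_mem ht]
    set τ := min (t - (a + u)) (b + U - t) with hτ
    have hτ0 : 0 ≤ τ := le_min (by linarith [ht.1]) (by linarith [ht.2])
    have h1 : τ ≤ t - (a + u) := min_le_left _ _
    have h2 : τ ≤ b + U - t := min_le_right _ _
    have hκτ : κ * τ ≤ τ / 3 := by nlinarith
    have hκτ0 : 0 ≤ κ * τ := by positivity
    have h3 : 3 * (κ * τ) ≤ 3 * κ * ((b - a) + (U - u)) := by nlinarith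
    set p := max a (t - U + κ * τ) with hp
    set q := min b (t - u - κ * τ) with hq
    have hpq : κ * τ ≤ q - p := by
      rcases max_cases a (t - U + κ * τ) with ⟨e1, _⟩ | ⟨e1, _⟩ <;>
      rcases min_cases b (t - u - κ * τ) with ⟨e2, _⟩ | ⟨e2, _⟩ <;>
      rw [hp, hq, e1, e2] <;> linarith
    calc ENNReal.ofReal (κ ^ (n + 1)) * ENNReal.ofReal (τ ^ (n + 1))
        = ENNReal.ofReal ((κ * τ) ^ n) * ENNReal.ofReal (κ * τ) := by
          rw [← ENNReal.ofReal_mul (by positivity), ← ENNReal.ofReal_mul (by positivity),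
            ← mul_pow, pow_succ]
      _ ≤ ENNReal.ofReal ((κ * τ) ^ n) * ENNReal.ofReal (q - p) := by gcongr
      _ = ∫⁻ y, (Icc p q).indicator (fun _ => ENNReal.ofReal ((κ * τ) ^ n)) y := by
          rw [lintegral_indicator_const measurableSet_Icc, Real.volume_Icc]
      _ ≤ ∫⁻ y, profile 0 a b y * profile n u U (-y + t) := by
          refine lintegral_mono (indicator_le fun y hy => ?_)
          have hya : a ≤ y := (le_max_left _ _).trans hy.1
          have hyU : t - U + κ * τ ≤ y := (le_max_right _ _).trans hy.1
          have hyb : y ≤ b := hy.2.trans (min_le_left _ _)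
          have hyu : y ≤ t - u - κ * τ := hy.2.trans (min_le_right _ _)
          rw [profile_of_mem ⟨hya, hyb⟩, profile_of_mem ⟨by linarith, by linarith⟩]
          simp only [pow_zero, ENNReal.ofReal_one, one_mul]
          gcongr
          exact le_min (by linarith) (by linarith)
  · simp [profile_of_notMem ht]

lemma conv_mono {μ μ' ν ν' : Measure ℝ} [SFinite ν'] (h : μ ≤ μ') (h' : ν ≤ ν') :
    μ ∗ ν ≤ μ' ∗ ν' :=
  Measure.map_mono (Measure.prod_mono h h') (by fun_prop)

/-! ### One-dimensional pushforwards -/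

/-- `f` is continuous on `ℝ`, and on `[0, 1]` it is differentiable with derivative in `[γ, Γ]`. -/
def HasSlopeIn (γ Γ : ℝ) (f : ℝ → ℝ) : Prop :=
  Continuous f ∧ ∃ f' : ℝ → ℝ, (∀ u ∈ Icc (0:ℝ) 1, HasDerivWithinAt f (f' u) (Icc (0:ℝ) 1) u) ∧
    ∀ u ∈ Icc (0:ℝ) 1, γ ≤ f' u ∧ f' u ≤ Γ

variable {γ Γ : ℝ}

lemma HasSlopeIn.sub_mem {f : ℝ → ℝ} (hf : HasSlopeIn γ Γ f) : f 1 - f 0 ∈ Icc γ Γ := by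
  obtain ⟨hc, f', hd, hb⟩ := hf
  obtain ⟨x, hx, he⟩ := exists_hasDerivAt_eq_slope f f' zero_lt_one hc.continuousOn
    fun x hx => (hd x (Ioo_subset_Icc_self hx)).hasDerivAt (Icc_mem_nhds hx.1 hx.2)
  have := hb x (Ioo_subset_Icc_self hx)
  rw [he] at this
  simpa using this

lemma HasSlopeIn.strictMonoOn {f : ℝ → ℝ} (hγ : 0 < γ) (hf : HasSlopeIn γ Γ f) :
    StrictMonoOn f (Icc 0 1) := by
  obtain ⟨hc, f', hd, hb⟩ := hf
  refine strictMonoOn_of_deriv_pos (convex_Icc 0 1) hc.continuousOn fun x hx => ?_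
  rw [interior_Icc] at hx
  rw [((hd x (Ioo_subset_Icc_self hx)).hasDerivAt (Icc_mem_nhds hx.1 hx.2)).deriv]
  exact hγ.trans_le (hb x (Ioo_subset_Icc_self hx)).1

lemma HasSlopeIn.image {f : ℝ → ℝ} (hγ : 0 < γ) (hf : HasSlopeIn γ Γ f) :
    f '' Icc 0 1 = Icc (f 0) (f 1) := by
  refine Subset.antisymm ?_ (intermediate_value_Icc zero_le_one hf.1.continuousOn)
  rintro _ ⟨x, hx, rfl⟩
  have := (hf.strictMonoOn hγ).monotoneOn
  exact ⟨this (by simp) hx hx.1, this hx (by simp) hx.2⟩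

/-- One-dimensional change of variables: the pushforward of the uniform law on `[0, 1]` has density
`1 / f'` on `[f 0, f 1]`, hence lies between `Γ⁻¹` and `γ⁻¹` times Lebesgue measure there. -/
lemma HasSlopeIn.map_bounds {f : ℝ → ℝ} (hγ : 0 < γ) (hγΓ : γ ≤ Γ) (hf : HasSlopeIn γ Γ f) :
    ENNReal.ofReal Γ⁻¹ • volume.withDensity (profile 0 (f 0) (f 1)) ≤
        Measure.map f (volume.restrict (Icc 0 1)) ∧
      Measure.map f (volume.restrict (Icc 0 1)) ≤
        ENNReal.ofReal γ⁻¹ • volume.withDensity (profile 0 (f 0) (f 1)) := by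
  have him := hf.image hγ
  have hinj := (hf.strictMonoOn hγ).injOn
  obtain ⟨hc, f', hd, hb⟩ := hf
  have hΓ : 0 < Γ := hγ.trans_le hγΓ
  have hm : ∀ s : Set ℝ, MeasurableSet s →
      Measure.map f (volume.restrict (Icc 0 1)) s =
        ∫⁻ x in Icc (0:ℝ) 1, s.indicator 1 (f x) := by
    intro s hs
    rw [← lintegral_indicator_one hs, lintegral_map (measurable_one.indicator hs) hc.measurable]
  have hv : ∀ s : Set ℝ, MeasurableSet s → volume.withDensity (profile 0 (f 0) (f 1)) s =
      ∫⁻ x in Icc (0:ℝ) 1, ENNReal.ofReal |f' x| * s.indicator 1 (f x) := by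
    intro s hs
    rw [withDensity_profile_zero, ← lintegral_indicator_one hs, ← him,
      lintegral_image_eq_lintegral_abs_deriv_mul measurableSet_Icc hd hinj]
  constructor
  · refine Measure.le_iff.2 fun s hs => ?_
    rw [hm s hs, Measure.smul_apply, hv s hs, smul_eq_mul,
      ← lintegral_const_mul' _ _ ENNReal.ofReal_ne_top]
    refine setLIntegral_mono' measurableSet_Icc fun x hx => ?_
    rw [← mul_assoc, ← ENNReal.ofReal_mul (by positivity)]
    refine mul_le_of_le_one_left zero_le ?_
    rw [ENNReal.ofReal_le_one, abs_of_pos (hγ.trans_le (hb x hx).1), inv_mul_le_iff₀ hΓ, mul_one]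
    exact (hb x hx).2
  · refine Measure.le_iff.2 fun s hs => ?_
    rw [hm s hs, Measure.smul_apply, hv s hs, smul_eq_mul,
      ← lintegral_const_mul' _ _ ENNReal.ofReal_ne_top]
    refine setLIntegral_mono' measurableSet_Icc fun x hx => ?_
    rw [← mul_assoc, ← ENNReal.ofReal_mul (by positivity)]
    refine le_mul_of_one_le_left zero_le ?_
    rw [ENNReal.one_le_ofReal, abs_of_pos (hγ.trans_le (hb x hx).1), le_inv_mul_iff₀ hγ, mul_one]
    exact (hb x hx).1

/-! ### Sums of independent coordinates -/

instance : IsProbabilityMeasure (volume.restrict (Icc (0:ℝ) 1)) := ⟨by simp⟩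

lemma measurable_sum {n : ℕ} {m : Fin n → ℝ → ℝ} (hm : ∀ j, HasSlopeIn γ Γ (m j)) :
    Measurable fun x : Fin n → ℝ => ∑ j, m j (x j) :=
  Finset.measurable_sum _ fun j _ => (hm j).1.measurable.comp (measurable_pi_apply j)

/-- Independence of the coordinates turns the law of the sum into a convolution. -/
lemma map_sum_succ {n : ℕ} {m : Fin (n + 1) → ℝ → ℝ} (hm : ∀ j, HasSlopeIn γ Γ (m j)) :
    Measure.map (fun x : Fin (n + 1) → ℝ => ∑ j, m j (x j))
        (Measure.pi fun _ => volume.restrict (Icc 0 1)) =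
      Measure.map (m 0) (volume.restrict (Icc 0 1)) ∗
        Measure.map (fun x : Fin n → ℝ => ∑ j, m j.succ (x j))
          (Measure.pi fun _ => volume.restrict (Icc 0 1)) := by
  have hs : Measurable fun x : Fin n → ℝ => ∑ j, m j.succ (x j) :=
    measurable_sum fun j => hm j.succ
  have h := measurePreserving_piFinSuccAbove
    (fun _ : Fin (n + 1) => (volume : Measure ℝ).restrict (Icc 0 1)) 0
  rw [Measure.conv, Measure.map_prod_map _ _ (hm 0).1.measurable hs, ← h.map_eq,
    Measure.map_map ((hm 0).1.measurable.prodMap hs) h.measurable,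
    Measure.map_map (by fun_prop) (((hm 0).1.measurable.prodMap hs).comp h.measurable)]
  congr 1
  ext x
  simp [Fin.sum_univ_succ, Fin.tail]

/-- The uniform-law case: by induction on the dimension, the pushforward of the uniform law on the
cube is comparable, as a measure, to the boundary profile. -/
lemma map_sum_bounds (hγ : 0 < γ) (hγΓ : γ ≤ Γ) (n : ℕ) :
    ∃ k1 k2 : ℝ, 0 < k1 ∧ 0 < k2 ∧ ∀ m : Fin (n + 1) → ℝ → ℝ, (∀ j, HasSlopeIn γ Γ (m j)) →
      ENNReal.ofReal k1 • volume.withDensity (profile n (∑ j, m j 0) (∑ j, m j 1)) ≤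
          Measure.map (fun x : Fin (n + 1) → ℝ => ∑ j, m j (x j))
            (Measure.pi fun _ => volume.restrict (Icc 0 1)) ∧
        Measure.map (fun x : Fin (n + 1) → ℝ => ∑ j, m j (x j))
            (Measure.pi fun _ => volume.restrict (Icc 0 1)) ≤
          ENNReal.ofReal k2 • volume.withDensity (profile n (∑ j, m j 0) (∑ j, m j 1)) := by
  have hΓ : 0 < Γ := hγ.trans_le hγΓ
  induction n with
  | zero =>
    refine ⟨Γ⁻¹, γ⁻¹, by positivity, by positivity, fun m hm => ?_⟩
    have h : Measure.map (fun x : Fin 1 → ℝ => ∑ j, m j (x j))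
        (Measure.pi fun _ => volume.restrict (Icc 0 1)) =
        Measure.map (m 0) (volume.restrict (Icc 0 1)) := by
      have he := measurePreserving_eval
        (fun _ : Fin 1 => (volume : Measure ℝ).restrict (Icc 0 1)) 0
      conv_rhs => rw [← he.map_eq, Measure.map_map (hm 0).1.measurable he.measurable]
      congr 1
      ext x
      simp
    rw [h]
    simpa using (hm 0).map_bounds hγ hγΓ
  | succ n ih =>
    obtain ⟨k1, k2, hk1, hk2, ih⟩ := ih
    -- the total length is at most `(n + 2) Γ`, while each factor has length at least `γ`
    set κ := γ / (3 * ((n + 2) * Γ)) with hκ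
    have hκ0 : 0 < κ := by positivity
    have hκ1 : 3 * κ * ((n + 2) * Γ) = γ := by rw [hκ]; field_simp
    have hκ3 : κ ≤ 1 / 3 := by
      rw [hκ, div_le_div_iff₀ (by positivity) (by norm_num)]
      have : (0:ℝ) ≤ n := n.cast_nonneg
      nlinarith [mul_nonneg this hΓ.le]
    refine ⟨Γ⁻¹ * k1 * κ ^ (n + 1), γ⁻¹ * k2, by positivity, by positivity, fun m hm => ?_⟩
    obtain ⟨ih1, ih2⟩ := ih (fun j => m j.succ) fun j => hm j.succ
    obtain ⟨b1, b2⟩ := (hm 0).map_bounds hγ hγΓ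
    have hL := (hm 0).sub_mem
    have hD1 : (n + 1) * γ ≤ (∑ j : Fin (n + 1), m j.succ 1) - ∑ j : Fin (n + 1), m j.succ 0 := by
      rw [← Finset.sum_sub_distrib]
      simpa using Finset.card_nsmul_le_sum (Finset.univ : Finset (Fin (n + 1)))
        (fun j => m j.succ 1 - m j.succ 0) γ fun j _ => (hm j.succ).sub_mem.1
    have hD2 : (∑ j : Fin (n + 1), m j.succ 1) - ∑ j : Fin (n + 1), m j.succ 0 ≤ (n + 1) * Γ := by
      rw [← Finset.sum_sub_distrib]
      simpa using Finset.sum_le_card_nsmul (Finset.univ : Finset (Fin (n + 1)))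
        (fun j => m j.succ 1 - m j.succ 0) Γ fun j _ => (hm j.succ).sub_mem.2
    rw [map_sum_succ hm, Fin.sum_univ_succ (fun j => m j 0), Fin.sum_univ_succ (fun j => m j 1)]
    set u := ∑ j : Fin (n + 1), m j.succ 0
    set U := ∑ j : Fin (n + 1), m j.succ 1
    have hD3 : γ ≤ U - u := by
      have : (0:ℝ) ≤ n := n.cast_nonneg
      nlinarith [mul_nonneg this hγ.le]
    have hT : 3 * κ * ((m 0 1 - m 0 0) + (U - u)) ≤ γ := by
      rw [← hκ1]
      gcongr
      linarith [hL.2]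
    have hmp := measurable_profile
    constructor
    · refine le_trans ?_ (conv_mono b1 ih1)
      rw [Measure.conv_smul_left, Measure.conv_smul_right,
        conv_withDensity_eq_lconvolution (hmp _ _ _) (hmp _ _ _), smul_smul,
        ENNReal.ofReal_mul (by positivity), ENNReal.ofReal_mul (by positivity), mul_smul]
      gcongr _ • ?_
      rw [← withDensity_smul _ (hmp _ _ _)]
      exact withDensity_mono (ae_of_all _ fun t =>
        le_lconvolution_profile n hκ0 hκ3 (hT.trans hD3) (hT.trans hL.1) t)
    · refine (conv_mono b2 ih2).trans ?_
      rw [Measure.conv_smul_left, Measure.conv_smul_right,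
        conv_withDensity_eq_lconvolution (hmp _ _ _) (hmp _ _ _), smul_smul,
        ENNReal.ofReal_mul (by positivity)]
      gcongr _ • ?_
      exact withDensity_mono (ae_of_all _ fun t => lconvolution_profile_le n _ _ _ _ t)

/-! ### From comparison of measures to pointwise density bounds -/

/-- A finite measure squeezed between two multiples of a profile has a density obeying the
corresponding bounds at every point: the Radon–Nikodym derivative obeys them almost everywhere, and
truncating it to the allowed range changes it on a null set only. -/
lemma exists_density (n : ℕ) {K1 K2 u U : ℝ} (hK1 : 0 < K1) (hK : K1 ≤ K2) {ν : Measure ℝ}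
    [IsFiniteMeasure ν]
    (h1 : ENNReal.ofReal K1 • volume.withDensity (profile n u U) ≤ ν)
    (h2 : ν ≤ ENNReal.ofReal K2 • volume.withDensity (profile n u U)) :
    ∃ f : ℝ → ℝ, (ν = volume.withDensity fun t => ENNReal.ofReal (f t)) ∧
      (∀ t, t ∉ Icc u U → f t = 0) ∧
      ∀ t ∈ Ioo u U, K1 * min (t - u) (U - t) ^ n ≤ f t ∧ f t ≤ K2 * min (t - u) (U - t) ^ n := by
  have hmp := measurable_profile n u U
  rw [← withDensity_smul _ hmp] at h1 h2
  have hac : ν ≪ volume :=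
    (Measure.absolutelyContinuous_of_le h2).trans (withDensity_absolutelyContinuous _ _)
  have hr := Measure.withDensity_rnDeriv_eq ν volume hac
  set r := ν.rnDeriv volume with hrdef
  have hrm : Measurable r := Measure.measurable_rnDeriv _ _
  have hle1 : (ENNReal.ofReal K1 • profile n u U) ≤ᵐ[volume] r := by
    refine ae_le_of_forall_setLIntegral_le_of_sigmaFinite (hmp.const_smul _) fun s hs _ => ?_
    rw [← withDensity_apply _ hs, ← withDensity_apply _ hs, hr]
    exact h1 s
  have hle2 : r ≤ᵐ[volume] (ENNReal.ofReal K2 • profile n u U) := by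
    refine ae_le_of_forall_setLIntegral_le_of_sigmaFinite hrm fun s hs _ => ?_
    rw [← withDensity_apply _ hs, ← withDensity_apply _ hs, hr]
    exact h2 s
  set w : ℝ → ℝ := (Icc u U).indicator fun t => min (t - u) (U - t) ^ n with hw
  have hw0 : ∀ t, 0 ≤ w t := fun t => indicator_nonneg (fun t ht =>
    pow_nonneg (le_min (by linarith [ht.1]) (by linarith [ht.2])) n) t
  have hpw : ∀ t, profile n u U t = ENNReal.ofReal (w t) := by
    intro t
    by_cases ht : t ∈ Icc u U
    · rw [profile_of_mem ht, hw, indicator_of_mem ht]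
    · rw [profile_of_notMem ht, hw, indicator_of_notMem ht, ENNReal.ofReal_zero]
  refine ⟨fun t => max (K1 * w t) (min (K2 * w t) (r t).toReal), ?_, fun t ht => ?_,
    fun t ht => ?_⟩
  · conv_lhs => rw [← hr]
    refine withDensity_congr_ae ?_
    filter_upwards [hle1, hle2] with t e1 e2
    simp only [Pi.smul_apply, smul_eq_mul, hpw] at e1 e2
    rw [← ENNReal.ofReal_mul hK1.le] at e1
    rw [← ENNReal.ofReal_mul (hK1.le.trans hK)] at e2
    have hfin : r t ≠ ∞ := ne_top_of_le_ne_top ENNReal.ofReal_ne_top e2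
    have e1' : K1 * w t ≤ (r t).toReal := (ENNReal.ofReal_le_iff_le_toReal hfin).1 e1
    have e2' : (r t).toReal ≤ K2 * w t :=
      ENNReal.toReal_le_of_le_ofReal (mul_nonneg (hK1.le.trans hK) (hw0 t)) e2
    rw [min_eq_right e2', max_eq_right e1', ENNReal.ofReal_toReal hfin]
  · simp [hw, indicator_of_notMem ht]
  · have hwt : w t = min (t - u) (U - t) ^ n := indicator_of_mem (Ioo_subset_Icc_self ht) _
    rw [← hwt]
    exact ⟨le_max_left _ _,
      max_le (mul_le_mul_of_nonneg_right hK (hw0 t)) (min_le_left _ _)⟩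

end AdditivePushforward

/-! ### Non-uniform laws on the cube -/

/-- **Boundary density decay for the pushforward of a quasi-uniform law on `[0,1]^d`
under a strictly monotone additive map.**  If `X` has a density `f_X` on `[0,1]^d`
bounded above and below, and `m(x) = Σ_j m_j(x_j)` with `C¹` components whose
derivatives lie in `[γ1, Γ1] ⊂ (0,∞)`, then `Y = m(X)` has a density `f_Y` on
`[u̲, ū]` comparable to `min{t−u̲, ū−t}^{d−1}`, with constants depending only on
`(d, c, C, γ1, Γ1)`. -/
theorem additive_pushforward_density
    (d : ℕ) (hd : 1 ≤ d) (c C γ1 Γ1 : ℝ)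
    (hc : 0 < c) (hcC : c ≤ C) (hγ1 : 0 < γ1) (hγΓ : γ1 ≤ Γ1) :
    ∃ k1 k2 : ℝ, 0 < k1 ∧ k1 ≤ k2 ∧
      ∀ (Ω : Type) [MeasureSpace Ω] [IsProbabilityMeasure (ℙ : Measure Ω)]
        (X : Ω → (Fin d → ℝ)) (f_X : (Fin d → ℝ) → ℝ) (m m' : Fin d → ℝ → ℝ),
        Measurable X → Measurable f_X →
        (∀ x ∈ Icc (0 : Fin d → ℝ) 1, c ≤ f_X x ∧ f_X x ≤ C) →
        (Measure.map X ℙ =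
          (volume.restrict (Icc (0 : Fin d → ℝ) 1)).withDensity
            fun x => ENNReal.ofReal (f_X x)) →
        (∀ j, ∀ u ∈ Icc (0:ℝ) 1, HasDerivWithinAt (m j) (m' j u) (Icc (0:ℝ) 1) u) →
        (∀ j, ContinuousOn (m' j) (Icc (0:ℝ) 1)) →
        (∀ j, ∀ u ∈ Icc (0:ℝ) 1, γ1 ≤ m' j u ∧ m' j u ≤ Γ1) →
        ∃ f_Y : ℝ → ℝ,
          (Measure.map (fun ω => ∑ j, m j (X ω j)) ℙ =
            volume.withDensity fun t => ENNReal.ofReal (f_Y t)) ∧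
          (∀ t, t ∉ Icc (∑ j, m j 0) (∑ j, m j 1) → f_Y t = 0) ∧
          (∀ t ∈ Ioo (∑ j, m j 0) (∑ j, m j 1),
            k1 * (min (t - ∑ j, m j 0) ((∑ j, m j 1) - t)) ^ (d - 1) ≤ f_Y t ∧
            f_Y t ≤ k2 * (min (t - ∑ j, m j 0) ((∑ j, m j 1) - t)) ^ (d - 1)) := by
  obtain ⟨n, rfl⟩ : ∃ n, d = n + 1 := ⟨d - 1, by omega⟩
  obtain ⟨k1, k2, hk1, hk2, H⟩ := AdditivePushforward.map_sum_bounds hγ1 hγΓ n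
  have hC : 0 < C := hc.trans_le hcC
  have hKK : c * k1 ≤ max (c * k1) (C * k2) := le_max_left _ _
  refine ⟨c * k1, max (c * k1) (C * k2), by positivity, hKK, ?_⟩
  intro Ω _ _ X f_X m m' hX hf hfb hmap hder _ hbd
  -- `m j` is unconstrained off `[0, 1]`; extend it continuously from `[0, 1]` to all of `ℝ`
  set M : Fin (n + 1) → ℝ → ℝ := fun j => IccExtend zero_le_one ((Icc (0:ℝ) 1).domRestrict (m j))
    with hM
  have hMm : ∀ j, ∀ u ∈ Icc (0:ℝ) 1, M j u = m j u := fun j u hu =>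
    IccExtend_of_mem zero_le_one _ hu
  have hs : ∀ j, AdditivePushforward.HasSlopeIn γ1 Γ1 (M j) := fun j =>
    ⟨(continuousOn_iff_continuous_domRestrict.1
        fun u hu => (hder j u hu).continuousWithinAt).Icc_extend',
      m' j, fun u hu => (hder j u hu).congr (fun v hv => hMm j v hv) (hMm j u hu), hbd j⟩
  have hpi : (Measure.pi fun _ : Fin (n + 1) => (volume : Measure ℝ).restrict (Icc 0 1)) =
      volume.restrict (Icc (0 : Fin (n + 1) → ℝ) 1) := by
    rw [← Measure.restrict_pi_pi, volume_pi, ← Set.pi_univ_Icc]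
    rfl
  have hcube : ∀ᵐ ω ∂(ℙ : Measure Ω), X ω ∈ Icc (0 : Fin (n + 1) → ℝ) 1 := by
    refine ae_of_ae_map hX.aemeasurable (p := fun x => x ∈ Icc (0 : Fin (n + 1) → ℝ) 1) ?_
    rw [hmap]
    exact (withDensity_absolutelyContinuous _ _).ae_le (ae_restrict_mem measurableSet_Icc)
  have hmeas := AdditivePushforward.measurable_sum hs
  have hν : Measure.map (fun ω => ∑ j, m j (X ω j)) ℙ =
      Measure.map (fun x : Fin (n + 1) → ℝ => ∑ j, M j (x j)) (Measure.map X ℙ) := by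
    rw [Measure.map_map hmeas hX]
    refine Measure.map_congr ?_
    filter_upwards [hcube] with ω hω
    exact Finset.sum_congr rfl fun j _ => (hMm j _ ⟨hω.1 j, hω.2 j⟩).symm
  have hlow : ENNReal.ofReal c • volume.restrict (Icc (0 : Fin (n + 1) → ℝ) 1) ≤
      Measure.map X ℙ := by
    rw [hmap, ← withDensity_const]
    refine withDensity_mono ((ae_restrict_mem measurableSet_Icc).mono fun x hx => ?_)
    exact ENNReal.ofReal_le_ofReal (hfb x hx).1
  have hup : Measure.map X ℙ ≤
      ENNReal.ofReal C • volume.restrict (Icc (0 : Fin (n + 1) → ℝ) 1) := by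
    rw [hmap, ← withDensity_const]
    refine withDensity_mono ((ae_restrict_mem measurableSet_Icc).mono fun x hx => ?_)
    exact ENNReal.ofReal_le_ofReal (hfb x hx).2
  obtain ⟨H1, H2⟩ := H M hs
  have h0 : ∑ j, M j 0 = ∑ j, m j 0 := Finset.sum_congr rfl fun j _ => hMm j 0 (by simp)
  have h1 : ∑ j, M j 1 = ∑ j, m j 1 := Finset.sum_congr rfl fun j _ => hMm j 1 (by simp)
  rw [hpi, h0, h1] at H1 H2
  have : IsProbabilityMeasure (Measure.map X ℙ) := Measure.isProbabilityMeasure_map hX.aemeasurable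
  rw [hν, Nat.add_sub_cancel]
  refine AdditivePushforward.exists_density n (by positivity) hKK ?_ ?_
  · refine le_trans ?_ (Measure.map_mono hlow hmeas)
    rw [Measure.map_smul, ENNReal.ofReal_mul hc.le, mul_smul]
    gcongr
  · refine (Measure.map_mono hup hmeas).trans ?_
    rw [Measure.map_smul]
    calc _ ≤ ENNReal.ofReal C • ENNReal.ofReal k2 •
          volume.withDensity (AdditivePushforward.profile n (∑ j, m j 0) (∑ j, m j 1)) := by gcongr
      _ ≤ _ := by
        rw [smul_smul, ← ENNReal.ofReal_mul hC.le]
        gcongr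
        exact le_max_right _ _
end

section
/- Let J⊂ℝ be an interval, let F:J→ℝ be differentiable with F'(u) = 1 and 1/4 ≤ F(u) ≤ 3/4 for all u∈J, and let Δ:J→ℝ be differentiable with |Δ'(u)| ≤ 1/2 for all u∈J; set G = F + Δ. Define the markup functions p_F(u) = (1 − F(u))/F'(u) and p_G(u) = (1 − G(u))/G'(u). Then for every u∈J one has the identity p_F(u) − p_G(u) = ((1 − F(u))·Δ'(u) + Δ(u))/(1 + Δ'(u)), and consequently |p_F(u) − p_G(u)| ≥ (2/3)·((1/4)·|Δ'(u)| − |Δ(u)|). -/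
/-!
The identity is algebra, since `1 + Δ' ≥ 1/2` is nonzero. For the bound, the numerator is at least
`(1/4)|Δ'| - |Δ|` in absolute value by the reverse triangle inequality and `1 - F ≥ 1/4`, while the
denominator is at most `3/2`.
-/

open Set

/-- **Markup separation under a bump perturbation of the CDF.**
With `F' ≡ 1`, `G = F + Δ` (so `G' = 1 + Δ'`), and the markups
`p_F = (1−F)/F'`, `p_G = (1−G)/G'`, one has the identity
`p_F − p_G = ((1−F)·Δ' + Δ)/(1 + Δ')` and the lower bound
`|p_F − p_G| ≥ (2/3)((1/4)|Δ'| − |Δ|)`. -/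
theorem markup_separation
    (J : Set ℝ) (F Δ Δ' : ℝ → ℝ)
    (hF : ∀ u ∈ J, HasDerivWithinAt F 1 J u)
    (hFbd : ∀ u ∈ J, F u ∈ Icc (1/4 : ℝ) (3/4))
    (hΔ : ∀ u ∈ J, HasDerivWithinAt Δ (Δ' u) J u)
    (hΔ' : ∀ u ∈ J, |Δ' u| ≤ 1/2) :
    ∀ u ∈ J,
      (1 - F u) / 1 - (1 - (F u + Δ u)) / (1 + Δ' u) =
        ((1 - F u) * Δ' u + Δ u) / (1 + Δ' u) ∧
      (2/3 : ℝ) * ((1/4) * |Δ' u| - |Δ u|) ≤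
        |(1 - F u) / 1 - (1 - (F u + Δ u)) / (1 + Δ' u)| := by
  intro u hu
  obtain ⟨hF1, hF2⟩ := hFbd u hu
  obtain ⟨hd1, hd2⟩ := abs_le.mp (hΔ' u hu)
  have hpos : 0 < 1 + Δ' u := by linarith
  have hid : (1 - F u) / 1 - (1 - (F u + Δ u)) / (1 + Δ' u) =
      ((1 - F u) * Δ' u + Δ u) / (1 + Δ' u) := by
    field_simp
    ring
  refine ⟨hid, ?_⟩
  rw [hid, abs_div, abs_of_pos hpos, le_div_iff₀ hpos]
  -- Reverse triangle inequality, with `1 - F u ≥ 1/4`.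
  have hnum : (1/4) * |Δ' u| - |Δ u| ≤ |(1 - F u) * Δ' u + Δ u| := by
    have h1 : |(1 - F u) * Δ' u| = (1 - F u) * |Δ' u| := by
      rw [abs_mul, abs_of_nonneg (by linarith)]
    have h2 := abs_sub_abs_le_abs_add ((1 - F u) * Δ' u) (Δ u)
    have h3 : (1/4) * |Δ' u| ≤ (1 - F u) * |Δ' u| :=
      mul_le_mul_of_nonneg_right (by linarith) (abs_nonneg _)
    linarith
  -- The bound `1 + Δ' u ≤ 3/2` only helps when the left-hand side is nonnegative.
  rcases le_total 0 ((1/4) * |Δ' u| - |Δ u|) with h | h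
  · nlinarith
  · have := abs_nonneg ((1 - F u) * Δ' u + Δ u)
    nlinarith
end
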